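/- Let d ≥ 1, let p₀, …, p_d ∈ ℝ^d be affinely independent points, let T be their convex hull, and let v : ℝ^d → ℝ be an affine function. Then (vol(T)/((d+1)(d+2))) Σ_{i=0}^{d} v(pᵢ)² ≤ ∫_T v(x)² dx ≤ (vol(T)/(d+1)) Σ_{i=0}^{d} v(pᵢ)², where vol(T) denotes the Lebesgue measure of T. -/

import Mathlib

open MeasureTheory

/-!
The bisection of an edge of a simplex `T` at its midpoint splits `T` into two affine images of
itself, each with Jacobian `1/2` and overlapping in a null set. Applied to products of two
barycentric coordinates, this self-similarity forces `∫_T λᵢ² = ∫_T λⱼ² = 2 ∫_T λᵢ λⱼ` for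
`i ≠ j`. Since the coordinates add up to `1`, the mass matrix of `T` follows: for `T` with `n`
vertices `pᵢ` and `v` affine,
`∫_T ‖v‖² = vol(T) / (n (n + 1)) * (∑ ‖v(pᵢ)‖² + ‖∑ v(pᵢ)‖²)`,
and the two bounds are `0 ≤ ‖∑ v(pᵢ)‖² ≤ n ∑ ‖v(pᵢ)‖²`.
-/

section AffineMaps

theorem affineMap_bijective_of_det_ne_zero {K V : Type*} [Field K] [AddCommGroup V] [Module K V]
    [FiniteDimensional K V] {φ : V →ᵃ[K] V} (hφ : φ.linear.det ≠ 0) :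
    Function.Bijective φ :=
  φ.linear_bijective_iff.1 <| (Module.End.isUnit_iff _).1 <|
    (LinearMap.isUnit_iff_isUnit_det _).2 hφ.isUnit

variable {E : Type*} [NormedAddCommGroup E] [NormedSpace ℝ E] [FiniteDimensional ℝ E]
  [MeasurableSpace E] [BorelSpace E] (μ : Measure E) [μ.IsAddHaarMeasure]

theorem setIntegral_image_affineMap {G : Type*} [NormedAddCommGroup G] [NormedSpace ℝ G]
    {φ : E →ᵃ[ℝ] E} (hφ : φ.linear.det ≠ 0) {s : Set E} (hs : MeasurableSet s) (g : E → G) :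
    ∫ x in φ '' s, g x ∂μ = |φ.linear.det| • ∫ x in s, g (φ x) ∂μ := by
  have hderiv (x : E) : HasFDerivAt φ φ.linear.toContinuousLinearMap x := by
    rw [φ.decomp]
    exact φ.linear.toContinuousLinearMap.hasFDerivAt.add_const (φ 0)
  rw [integral_image_eq_integral_abs_det_fderiv_smul μ hs
    (fun x _ => (hderiv x).hasFDerivWithinAt)
    (affineMap_bijective_of_det_ne_zero hφ).injective.injOn]
  simp only [LinearMap.det_toContinuousLinearMap, integral_smul]

theorem measure_zeroSet_affineMap {f : E →ᵃ[ℝ] ℝ} {x₀ : E} (hx₀ : f x₀ ≠ 0) :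
    μ {x | f x = 0} = 0 := by
  let Z : AffineSubspace ℝ E := (affineSpan ℝ {0}).comap f
  have mem_Z (x : E) : x ∈ Z ↔ f x = 0 := by simp [Z]
  have hZ : Z ≠ ⊤ := fun h => hx₀ <| (mem_Z x₀).1 <| h ▸ AffineSubspace.mem_top ℝ E x₀
  simp only [← mem_Z]
  exact Measure.addHaar_affineSubspace μ Z hZ

theorem measure_convexHull_of_affineSpan_ne_top {s : Set E} (hs : affineSpan ℝ s ≠ ⊤) :
    μ (convexHull ℝ s) = 0 :=
  measure_mono_null (convexHull_subset_affineSpan s) (Measure.addHaar_affineSubspace μ _ hs)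

end AffineMaps

section BarycentricCoordinates

variable {E : Type*} [AddCommGroup E] [Module ℝ E] {ι : Type*}

theorem mem_simplex_iff_coord_nonneg (b : AffineBasis ι ℝ E) (x : E) :
    x ∈ convexHull ℝ (Set.range b) ↔ ∀ k, 0 ≤ b.coord k x := by
  rw [b.convexHull_eq_nonneg_coord, Set.mem_ofPred_eq]

theorem affineMap_eq_sum_coord_smul (b : AffineBasis ι ℝ E) [Fintype ι] {F : Type*}
    [AddCommGroup F] [Module ℝ F] (v : E →ᵃ[ℝ] F) (x : E) :
    v x = ∑ i, b.coord i x • v (b i) := by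
  have hone := b.sum_coord_apply_eq_one x
  conv_lhs => rw [← b.affineCombination_coord_eq_self x]
  rw [Finset.map_affineCombination _ _ _ hone,
    Finset.affineCombination_eq_linear_combination _ _ _ hone]
  rfl

/-- The affine map that sends the vertex `b j` to the midpoint of the edge from `b i` to `b j` and
fixes the other vertices; it maps the simplex onto the half of it that contains `b i`. -/
noncomputable def edgeBisection (b : AffineBasis ι ℝ E) (i j : ι) : E →ᵃ[ℝ] E where
  toFun x := x + b.coord j x • (1 / 2 : ℝ) • (b i - b j)
  linear := LinearMap.transvection (b.coord j).linear ((1 / 2 : ℝ) • (b i - b j))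
  map_vadd' x u := by
    rw [AffineMap.map_vadd]
    simp only [vadd_eq_add, LinearMap.transvection.apply, add_smul]
    abel

variable (b : AffineBasis ι ℝ E) {i j k : ι}

theorem coord_linear_sub (i j k : ι) :
    (b.coord k).linear (b i - b j) = b.coord k (b i) - b.coord k (b j) :=
  (b.coord k).linearMap_vsub (b i) (b j)

theorem coord_edgeBisection (i j k : ι) (x : E) :
    b.coord k (edgeBisection b i j x) =
      b.coord k x + b.coord j x / 2 * (b.coord k (b i) - b.coord k (b j)) := by
  have h := (b.coord k).map_vadd x (b.coord j x • (1 / 2 : ℝ) • (b i - b j))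
  simp only [vadd_eq_add, map_smul, coord_linear_sub, smul_eq_mul] at h
  simp only [edgeBisection, AffineMap.coe_mk, add_comm x, h]
  ring

theorem coord_left_edgeBisection (hij : i ≠ j) (x : E) :
    b.coord i (edgeBisection b i j x) = b.coord i x + b.coord j x / 2 := by
  simp [coord_edgeBisection, hij]

theorem coord_right_edgeBisection (hij : i ≠ j) (x : E) :
    b.coord j (edgeBisection b i j x) = b.coord j x / 2 := by
  rw [coord_edgeBisection, b.coord_apply_eq, b.coord_apply_ne hij.symm]
  ring

theorem coord_edgeBisection_of_ne (hki : k ≠ i) (hkj : k ≠ j) (x : E) :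
    b.coord k (edgeBisection b i j x) = b.coord k x := by
  simp [coord_edgeBisection, hki, hkj]

theorem edgeBisection_preimage_half (hij : i ≠ j) :
    edgeBisection b i j ⁻¹' (convexHull ℝ (Set.range b) ∩ {x | b.coord j x ≤ b.coord i x}) =
      convexHull ℝ (Set.range b) := by
  ext x
  simp only [Set.mem_preimage, Set.mem_inter_iff, Set.mem_ofPred_eq, mem_simplex_iff_coord_nonneg,
    coord_left_edgeBisection b hij, coord_right_edgeBisection b hij]
  constructor
  · rintro ⟨hx, hle⟩ k
    have hj := hx j
    rw [coord_right_edgeBisection b hij] at hj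
    rcases eq_or_ne k i with rfl | hki
    · linarith
    rcases eq_or_ne k j with rfl | hkj
    · linarith
    simpa only [coord_edgeBisection_of_ne b hki hkj] using hx k
  · intro hx
    have hi := hx i
    have hj := hx j
    refine ⟨fun k => ?_, by linarith⟩
    rcases eq_or_ne k i with rfl | hki
    · rw [coord_left_edgeBisection b hij]; positivity
    rcases eq_or_ne k j with rfl | hkj
    · rw [coord_right_edgeBisection b hij]; positivity
    simpa only [coord_edgeBisection_of_ne b hki hkj] using hx k

variable [FiniteDimensional ℝ E]

theorem det_linear_edgeBisection (hij : i ≠ j) : (edgeBisection b i j).linear.det = 1 / 2 := by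
  rw [edgeBisection, LinearMap.transvection.det, map_smul, coord_linear_sub, b.coord_apply_eq,
    b.coord_apply_ne hij.symm]
  norm_num

theorem edgeBisection_image (hij : i ≠ j) :
    edgeBisection b i j '' convexHull ℝ (Set.range b) =
      convexHull ℝ (Set.range b) ∩ {x | b.coord j x ≤ b.coord i x} := by
  have hdet : (edgeBisection b i j).linear.det ≠ 0 := by
    rw [det_linear_edgeBisection b hij]; norm_num
  conv_lhs => rw [← edgeBisection_preimage_half b hij]
  exact Set.image_preimage_eq _ (affineMap_bijective_of_det_ne_zero hdet).surjective

end BarycentricCoordinates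

section SelfSimilarity

variable {E : Type*} [NormedAddCommGroup E] [NormedSpace ℝ E] {ι : Type*} [Finite ι]
  (b : AffineBasis ι ℝ E) [FiniteDimensional ℝ E] [MeasurableSpace E] [BorelSpace E]
  (μ : Measure E) [μ.IsAddHaarMeasure] {i j : ι}

theorem setIntegral_half_simplex {G : Type*} [NormedAddCommGroup G] [NormedSpace ℝ G]
    (hij : i ≠ j) (g : E → G) :
    ∫ x in convexHull ℝ (Set.range b) ∩ {x | b.coord j x ≤ b.coord i x}, g x ∂μ =
      (1 / 2 : ℝ) • ∫ x in convexHull ℝ (Set.range b), g (edgeBisection b i j x) ∂μ := by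
  have hdet := det_linear_edgeBisection b hij
  rw [← edgeBisection_image b hij, setIntegral_image_affineMap μ (by rw [hdet]; norm_num)
    ((Set.finite_range b).isCompact_convexHull ℝ).measurableSet, hdet, abs_of_pos one_half_pos]

theorem setIntegral_simplex_eq_edgeBisection {G : Type*} [NormedAddCommGroup G] [NormedSpace ℝ G]
    (hij : i ≠ j) {g : E → G} (hg : IntegrableOn g (convexHull ℝ (Set.range b)) μ) :
    ∫ x in convexHull ℝ (Set.range b), g x ∂μ =
      (1 / 2 : ℝ) • ∫ x in convexHull ℝ (Set.range b), g (edgeBisection b i j x) ∂μ +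
      (1 / 2 : ℝ) • ∫ x in convexHull ℝ (Set.range b), g (edgeBisection b j i x) ∂μ := by
  set T := convexHull ℝ (Set.range b)
  have hcover : T = T ∩ {x | b.coord j x ≤ b.coord i x} ∪ T ∩ {x | b.coord i x ≤ b.coord j x} := by
    rw [← Set.inter_union_distrib_left, Set.left_eq_inter]
    exact fun x _ => le_total (b.coord j x) (b.coord i x)
  have hoverlap : AEDisjoint μ (T ∩ {x | b.coord j x ≤ b.coord i x})
      (T ∩ {x | b.coord i x ≤ b.coord j x}) := by
    have hnull : μ {x | (b.coord i - b.coord j) x = 0} = 0 :=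
      measure_zeroSet_affineMap μ (x₀ := b i) (by simp [hij.symm])
    refine measure_mono_null (fun x hx => ?_) hnull
    simpa [sub_eq_zero] using le_antisymm hx.2.2 hx.1.2
  have hmeas : MeasurableSet (T ∩ {x | b.coord i x ≤ b.coord j x}) :=
    ((Set.finite_range b).isCompact_convexHull ℝ).measurableSet.inter
      (isClosed_le (b.coord i).continuous_of_finiteDimensional
        (b.coord j).continuous_of_finiteDimensional).measurableSet
  rw [← setIntegral_half_simplex b μ hij, ← setIntegral_half_simplex b μ hij.symm,
    ← setIntegral_union₀ hoverlap hmeas.nullMeasurableSet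
      (hg.mono_set Set.inter_subset_left) (hg.mono_set Set.inter_subset_left), ← hcover]

end SelfSimilarity

section MassMatrix

variable {E : Type*} [NormedAddCommGroup E] [NormedSpace ℝ E] [MeasurableSpace E] {ι : Type*}

/-- The mass matrix `∫_T λᵢ λⱼ` of the simplex `T` spanned by `b`, where the barycentric
coordinates `λᵢ` are the nodal basis of the affine functions on `T`. -/
noncomputable def massMatrix (b : AffineBasis ι ℝ E) (μ : Measure E) : Matrix ι ι ℝ :=
  Matrix.of fun i j => ∫ x in convexHull ℝ (Set.range b), b.coord i x * b.coord j x ∂μ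

variable (b : AffineBasis ι ℝ E) (μ : Measure E)

theorem massMatrix_apply (i j : ι) :
    massMatrix b μ i j = ∫ x in convexHull ℝ (Set.range b), b.coord i x * b.coord j x ∂μ :=
  rfl

theorem massMatrix_comm (i j : ι) : massMatrix b μ i j = massMatrix b μ j i := by
  simp only [massMatrix_apply, mul_comm]

variable [FiniteDimensional ℝ E] [BorelSpace E]

section Finite

variable [Finite ι]

theorem integrableOn_coord_mul_coord [IsFiniteMeasureOnCompacts μ] (i j : ι) :
    IntegrableOn (fun x => b.coord i x * b.coord j x) (convexHull ℝ (Set.range b)) μ :=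
  ((b.coord i).continuous_of_finiteDimensional.mul
    (b.coord j).continuous_of_finiteDimensional).continuousOn.integrableOn_compact
    ((Set.finite_range b).isCompact_convexHull ℝ)

theorem setIntegral_coord_comb_mul_coord_comb [IsFiniteMeasureOnCompacts μ] (i j : ι)
    (α β γ δ : ℝ) :
    ∫ x in convexHull ℝ (Set.range b),
        (α * b.coord i x + β * b.coord j x) * (γ * b.coord i x + δ * b.coord j x) ∂μ =
      α * γ * massMatrix b μ i i + (α * δ + β * γ) * massMatrix b μ i j +
        β * δ * massMatrix b μ j j := by
  have hint (c : ℝ) (k l : ι) := (integrableOn_coord_mul_coord b μ k l).const_mul c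
  have hexpand (x : E) :
      (α * b.coord i x + β * b.coord j x) * (γ * b.coord i x + δ * b.coord j x) =
        α * γ * (b.coord i x * b.coord i x) + (α * δ + β * γ) * (b.coord i x * b.coord j x) +
          β * δ * (b.coord j x * b.coord j x) := by ring
  simp only [hexpand]
  refine (integral_add ((hint _ i i).add (hint _ i j)) (hint _ j j)).trans ?_
  rw [integral_add' (hint _ _ _) (hint _ _ _)]
  simp only [integral_const_mul, massMatrix_apply]

variable [μ.IsAddHaarMeasure] {i j : ι}

theorem massMatrix_diag_eq_bisection (hij : i ≠ j) :
    massMatrix b μ i i =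
      1 / 2 * (massMatrix b μ i i + massMatrix b μ i j + 1 / 4 * massMatrix b μ j j) +
        1 / 2 * (1 / 4 * massMatrix b μ i i) := by
  have h := setIntegral_simplex_eq_edgeBisection b μ hij (integrableOn_coord_mul_coord b μ i i)
  have hleft := setIntegral_coord_comb_mul_coord_comb b μ i j 1 (1 / 2) 1 (1 / 2)
  have hright := setIntegral_coord_comb_mul_coord_comb b μ i j (1 / 2) 0 (1 / 2) 0
  simp only [coord_left_edgeBisection b hij, coord_right_edgeBisection b hij.symm,
    ← massMatrix_apply, smul_eq_mul] at h
  -- normalizes the integrands, so that the integrals in `h` become those in `hleft` and `hright`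
  ring_nf at h hleft hright ⊢
  linarith

theorem massMatrix_offDiag_eq_bisection (hij : i ≠ j) :
    massMatrix b μ i j =
      1 / 2 * (1 / 2 * massMatrix b μ i j + 1 / 4 * massMatrix b μ j j) +
        1 / 2 * (1 / 2 * massMatrix b μ i j + 1 / 4 * massMatrix b μ i i) := by
  have h := setIntegral_simplex_eq_edgeBisection b μ hij (integrableOn_coord_mul_coord b μ i j)
  have hleft := setIntegral_coord_comb_mul_coord_comb b μ i j 1 (1 / 2) 0 (1 / 2)
  have hright := setIntegral_coord_comb_mul_coord_comb b μ i j (1 / 2) 0 (1 / 2) 1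
  simp only [coord_left_edgeBisection b hij, coord_right_edgeBisection b hij,
    coord_left_edgeBisection b hij.symm, coord_right_edgeBisection b hij.symm,
    ← massMatrix_apply, smul_eq_mul] at h
  -- normalizes the integrands, so that the integrals in `h` become those in `hleft` and `hright`
  ring_nf at h hleft hright ⊢
  linarith

theorem massMatrix_diag_eq_two_mul_offDiag (hij : i ≠ j) :
    massMatrix b μ i i = 2 * massMatrix b μ i j := by
  linarith [massMatrix_diag_eq_bisection b μ hij, massMatrix_offDiag_eq_bisection b μ hij]

theorem massMatrix_diag_eq_diag (i j : ι) : massMatrix b μ i i = massMatrix b μ j j := by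
  rcases eq_or_ne i j with rfl | hij
  · rfl
  · rw [massMatrix_diag_eq_two_mul_offDiag b μ hij, massMatrix_comm,
      ← massMatrix_diag_eq_two_mul_offDiag b μ hij.symm]

end Finite

section Fintype

variable [Fintype ι] {F : Type*} [NormedAddCommGroup F] [InnerProductSpace ℝ F]

theorem setIntegral_inner_affineMap [IsFiniteMeasureOnCompacts μ] (u v : E →ᵃ[ℝ] F) :
    ∫ x in convexHull ℝ (Set.range b), inner ℝ (u x) (v x) ∂μ =
      ∑ i, ∑ j, massMatrix b μ i j * inner ℝ (u (b i)) (v (b j)) := by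
  have hexpand (x : E) : inner ℝ (u x) (v x) =
      ∑ i, ∑ j, b.coord i x * b.coord j x * inner ℝ (u (b i)) (v (b j)) := by
    rw [affineMap_eq_sum_coord_smul b u, affineMap_eq_sum_coord_smul b v, sum_inner]
    simp only [inner_sum, real_inner_smul_left, real_inner_smul_right, mul_assoc]
    exact Finset.sum_congr rfl fun i _ => Finset.sum_congr rfl fun j _ => mul_left_comm _ _ _
  have hint (i j : ι) :=
    (integrableOn_coord_mul_coord b μ i j).mul_const (inner ℝ (u (b i)) (v (b j)))
  simp only [hexpand]
  rw [integral_finsetSum _ fun i _ => integrable_finsetSum _ fun j _ => hint i j]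
  simp only [integral_finsetSum _ fun j _ => hint _ j, integral_mul_const, massMatrix_apply]

theorem sum_massMatrix [IsFiniteMeasureOnCompacts μ] :
    ∑ i, ∑ j, massMatrix b μ i j = μ.real (convexHull ℝ (Set.range b)) := by
  simpa using (setIntegral_inner_affineMap b μ (AffineMap.const ℝ E (1 : ℝ))
    (AffineMap.const ℝ E 1)).symm

variable [μ.IsAddHaarMeasure]

theorem massMatrix_eq [DecidableEq ι] (i j : ι) :
    massMatrix b μ i j =
      μ.real (convexHull ℝ (Set.range b)) / (Fintype.card ι * (Fintype.card ι + 1)) *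
        (1 + if i = j then 1 else 0) := by
  have hentry (k l : ι) :
      massMatrix b μ k l = massMatrix b μ i i / 2 * (1 + if k = l then 1 else 0) := by
    split_ifs with hkl
    · rw [hkl, massMatrix_diag_eq_diag b μ i l]; ring
    · rw [massMatrix_diag_eq_diag b μ i k, massMatrix_diag_eq_two_mul_offDiag b μ hkl]; ring
  have hsum : massMatrix b μ i i / 2 * (Fintype.card ι * (Fintype.card ι + 1)) =
      μ.real (convexHull ℝ (Set.range b)) := by
    calc
      _ = ∑ k : ι, ∑ l : ι, massMatrix b μ i i / 2 * (1 + if k = l then 1 else 0) := by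
        simp only [← Finset.mul_sum, Finset.sum_add_distrib, Finset.sum_ite_eq,
          Finset.mem_univ, if_true, Finset.sum_const, Finset.card_univ, nsmul_eq_mul, mul_one]
        ring
      _ = ∑ k, ∑ l, massMatrix b μ k l := by simp only [← hentry]
      _ = _ := sum_massMatrix b μ
  have : Nonempty ι := b.nonempty
  rw [hentry, eq_div_of_mul_eq (by positivity) hsum]

theorem setIntegral_norm_sq_affineMap (v : E →ᵃ[ℝ] F) :
    ∫ x in convexHull ℝ (Set.range b), ‖v x‖ ^ 2 ∂μ =
      μ.real (convexHull ℝ (Set.range b)) / (Fintype.card ι * (Fintype.card ι + 1)) *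
        (∑ i, ‖v (b i)‖ ^ 2 + ‖∑ i, v (b i)‖ ^ 2) := by
  classical
  simp only [← real_inner_self_eq_norm_sq]
  rw [setIntegral_inner_affineMap, sum_inner]
  simp only [massMatrix_eq, mul_assoc, ← Finset.mul_sum, add_mul, one_mul, ite_mul, zero_mul,
    Finset.sum_add_distrib, Finset.sum_ite_eq, Finset.mem_univ, if_true, inner_sum]
  ring

end Fintype

end MassMatrix

theorem norm_sum_sq_le_card_mul_sum_norm_sq {ι F : Type*} [SeminormedAddCommGroup F]
    (s : Finset ι) (w : ι → F) : ‖∑ i ∈ s, w i‖ ^ 2 ≤ s.card * ∑ i ∈ s, ‖w i‖ ^ 2 :=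
  (pow_le_pow_left₀ (norm_nonneg _) (norm_sum_le s w) 2).trans sq_sum_le_card_mul_sum_sq

theorem simplex_mass_lumping_bounds_general {E F ι : Type*} [NormedAddCommGroup E]
    [NormedSpace ℝ E] [FiniteDimensional ℝ E] [MeasurableSpace E] [BorelSpace E]
    [NormedAddCommGroup F] [InnerProductSpace ℝ F] [Fintype ι]
    (μ : Measure E) [μ.IsAddHaarMeasure] {p : ι → E}
    (hcard : Fintype.card ι = Module.finrank ℝ E + 1) (v : E →ᵃ[ℝ] F) :
    μ.real (convexHull ℝ (Set.range p)) / (Fintype.card ι * (Fintype.card ι + 1)) *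
        ∑ i, ‖v (p i)‖ ^ 2 ≤ ∫ x in convexHull ℝ (Set.range p), ‖v x‖ ^ 2 ∂μ ∧
      ∫ x in convexHull ℝ (Set.range p), ‖v x‖ ^ 2 ∂μ ≤
        μ.real (convexHull ℝ (Set.range p)) / Fintype.card ι * ∑ i, ‖v (p i)‖ ^ 2 := by
  by_cases hspan : affineSpan ℝ (Set.range p) = ⊤
  · have hind : AffineIndependent ℝ p := by
      rw [affineIndependent_iff_finrank_vectorSpan_eq ℝ p hcard,
        AffineSubspace.vectorSpan_eq_top_of_affineSpan_eq_top ℝ E E hspan, finrank_top]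
    have hformula : ∫ x in convexHull ℝ (Set.range p), ‖v x‖ ^ 2 ∂μ =
        μ.real (convexHull ℝ (Set.range p)) / (Fintype.card ι * (Fintype.card ι + 1)) *
          (∑ i, ‖v (p i)‖ ^ 2 + ‖∑ i, v (p i)‖ ^ 2) :=
      setIntegral_norm_sq_affineMap ⟨p, hind, hspan⟩ μ v
    have hn : (0 : ℝ) < Fintype.card ι := by rw [hcard]; positivity
    have hsum := norm_sum_sq_le_card_mul_sum_norm_sq Finset.univ fun i => v (p i)
    rw [Finset.card_univ] at hsum
    rw [hformula]
    constructor
    · gcongr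
      exact le_add_of_nonneg_right (sq_nonneg _)
    · calc
        _ ≤ μ.real (convexHull ℝ (Set.range p)) / (Fintype.card ι * (Fintype.card ι + 1)) *
            (∑ i, ‖v (p i)‖ ^ 2 + Fintype.card ι * ∑ i, ‖v (p i)‖ ^ 2) := by gcongr
        _ = _ := by field_simp; ring
  · have hnull := measure_convexHull_of_affineSpan_ne_top μ hspan
    simp [measureReal_def, hnull, setIntegral_measure_zero]

/-- Element-level equivalence of the mass-lumped and `L²` norms for affine
functions: if `T` is the simplex spanned by affinely independent points
`p₀, …, p_d` in `ℝ^d` and `v` is affine, then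
`(vol(T)/((d+1)(d+2))) Σᵢ v(pᵢ)² ≤ ∫_T v² ≤ (vol(T)/(d+1)) Σᵢ v(pᵢ)²`. -/
theorem simplex_mass_lumping_bounds
    {d : ℕ} (hd : 1 ≤ d) (p : Fin (d + 1) → EuclideanSpace ℝ (Fin d))
    (hp : AffineIndependent ℝ p)
    (v : EuclideanSpace ℝ (Fin d) →ᵃ[ℝ] ℝ) :
    ((volume (convexHull ℝ (Set.range p))).toReal / ((d + 1) * (d + 2))) *
        ∑ i : Fin (d + 1), (v (p i)) ^ 2
      ≤ (∫ x in convexHull ℝ (Set.range p), (v x) ^ 2) ∧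
    (∫ x in convexHull ℝ (Set.range p), (v x) ^ 2)
      ≤ ((volume (convexHull ℝ (Set.range p))).toReal / (d + 1)) *
        ∑ i : Fin (d + 1), (v (p i)) ^ 2 := by
  simpa [measureReal_def, add_assoc, one_add_one_eq_two] using
    simplex_mass_lumping_bounds_general volume (p := p) (by simp) v
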